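/- arXiv:2111.09949 — 2 statements merged into one kernel-verified Lean document; each statement's English description precedes it below -/
import Mathlib

section
/- Let A ∈ ℤ^{n×n} be nonsingular with Smith form S = diag(s_1,…,s_n), and let M ∈ ℤ^{n×n} be a reduced Smith massager for 2A, i.e., a Smith massager for 2A all of whose entries in column j lie in the interval [0, 2s_j). Let λ = 105·max(n, ⌈(det(2S))^{1/n}⌉), where ⌈(det(2S))^{1/n}⌉ is the least positive integer t with t^n ≥ det(2S). Then the number of matrices R ∈ ℤ^{n×n} with all entries in {0, 1, …, λ−1} for which there exists a prime p such that the last n−1 columns of M + 2RS are linearly dependent over the field ℤ/(p) is strictly less than λ^{n²}/2. Equivalently, if the entries of R are chosen independently and uniformly at random from {0,…,λ−1}, the probability that some prime p makes the last n−1 columns of M + 2RS linearly dependent modulo p is less than 1/2. -/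
open Matrix

/-- A square integer matrix is unimodular if its determinant is `±1`. -/
def IsUnimodular {ι : Type*} [Fintype ι] [DecidableEq ι] (U : Matrix ι ι ℤ) : Prop :=
  U.det = 1 ∨ U.det = -1

/-- `S` is a Smith form of `A`: it is diagonal with positive diagonal entries
forming a divisibility chain, and `P * A * Q = S` for some unimodular `P`, `Q`. -/
def IsSmithForm {n : ℕ} (A S : Matrix (Fin n) (Fin n) ℤ) : Prop :=
  (∀ i j : Fin n, i ≠ j → S i j = 0) ∧ (∀ i, 0 < S i i) ∧
  (∀ i j : Fin n, i ≤ j → S i i ∣ S j j) ∧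
  ∃ P Q : Matrix (Fin n) (Fin n) ℤ, IsUnimodular P ∧ IsUnimodular Q ∧ P * A * Q = S

/-- `B ≡ C (colmod S)`: column `j` of `B` is congruent to column `j` of `C`
modulo the `j`-th diagonal entry of `S`. -/
def ColMod {ι : Type*} [Fintype ι] (S B C : Matrix ι ι ℤ) : Prop :=
  ∀ i j, S j j ∣ (B i j - C i j)

/-- `M` is a Smith massager for `A` (with Smith form `S`):
`A * M ≡ 0 (colmod S)` and `W * M ≡ I (colmod S)` for some integer matrix `W`. -/
def IsSmithMassager {ι : Type*} [Fintype ι] [DecidableEq ι] (A S M : Matrix ι ι ℤ) : Prop :=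
  ColMod S (A * M) 0 ∧ ∃ W : Matrix ι ι ℤ, ColMod S (W * M) 1
lemma exists_minor {n : ℕ} {ι K : Type*} [Fintype ι] [DecidableEq ι] [Field K]
    (C : Matrix (Fin n) ι K) (h : LinearIndependent K (fun k i => C i k)) :
    ∃ f : ι → Fin n, (C.submatrix f id).det ≠ 0 := by
  obtain ⟨κ, a, ha, hs, hl⟩ := exists_linearIndependent' K C.row
  have : Finite κ := Finite.of_injective a ha
  have := Fintype.ofFinite κ
  have h1 : C.rank = Fintype.card ι := by
    have : LinearIndependent K (Cᵀ).row := h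
    rw [← Matrix.rank_transpose]; exact this.rank_matrix
  have h2 : Fintype.card κ = Fintype.card ι := by
    rw [← finrank_span_eq_card hl, hs, ← Matrix.rank_eq_finrank_span_row, h1]
  let e : ι ≃ κ := (Fintype.equivOfCardEq h2).symm
  refine ⟨a ∘ e, ?_⟩
  have h3 : LinearIndependent K (C.submatrix (a ∘ e) id).row := hl.comp e e.injective
  rw [Matrix.linearIndependent_rows_iff_isUnit, Matrix.isUnit_iff_isUnit_det] at h3
  exact h3.ne_zero

def dMat {n : ℕ} {ι K : Type*} (C : Matrix (Fin n) ι K) (v : Fin n → K)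
    (f : ι → Fin n) (r : Fin n) : Matrix (ι ⊕ Unit) (ι ⊕ Unit) K :=
  Matrix.of fun x y => Sum.elim (C (Sum.elim f (fun _ => r) x))
    (fun _ => v (Sum.elim f (fun _ => r) x)) y

lemma dMat_sub {n : ℕ} {ι : Type*} [Fintype ι] [DecidableEq ι]
    (C : Matrix (Fin n) ι ℤ) (v v' : Fin n → ℤ) (f : ι → Fin n) (r : Fin n)
    (h : ∀ i, v (f i) = v' (f i)) :
    (dMat C v f r).det - (dMat C v' f r).det = (C.submatrix f id).det * (v r - v' r) := by
  have e1 : dMat C v f r = (dMat C v' f r).updateCol (Sum.inr ())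
      ((fun x => v' (Sum.elim f (fun _ => r) x)) +
        (fun x => (v - v') (Sum.elim f (fun _ => r) x))) := by
    ext x y
    rcases y with y | y
    · simp [dMat, Matrix.updateCol_apply]
    · simp [dMat]
  have e2 : (dMat C v' f r).updateCol (Sum.inr ())
      (fun x => v' (Sum.elim f (fun _ => r) x)) = dMat C v' f r := by
    ext x y
    rcases y with y | y
    · simp [dMat, Matrix.updateCol_apply]
    · simp [dMat]
  have e3 : (dMat C v' f r).updateCol (Sum.inr ())
      (fun x => (v - v') (Sum.elim f (fun _ => r) x)) =
      Matrix.fromBlocks (C.submatrix f id) 0 (Matrix.of fun _ k => C r k)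
        (Matrix.of fun _ _ => v r - v' r) := by
    ext x y
    rcases y with y | y <;> rcases x with x | x <;>
      simp [dMat, Matrix.updateCol_apply, h]
  rw [e1, Matrix.det_updateCol_add, e2, e3, Matrix.det_fromBlocks_zero₁₂]
  simp

lemma dMat_dvd {n : ℕ} {ι : Type*} [Fintype ι] [DecidableEq ι]
    (C : Matrix (Fin n) ι ℤ) (v : Fin n → ℤ) (f : ι → Fin n) (r : Fin n)
    (p : ℕ) (hp : p.Prime)
    (h : (fun i => (v i : ZMod p)) ∈ Submodule.span (ZMod p)
      (Set.range (fun (k : ι) (i : Fin n) => (C i k : ZMod p)))) :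
    (p : ℤ) ∣ (dMat C v f r).det := by
  have := Fact.mk hp
  rw [← ZMod.intCast_zmod_eq_zero_iff_dvd, Int.cast_det]
  rw [Submodule.mem_span_range_iff_exists_fun] at h
  obtain ⟨c, hc⟩ := h
  rw [← Matrix.exists_mulVec_eq_zero_iff]
  refine ⟨Sum.elim c (fun _ => -1), ?_, ?_⟩
  · intro h0
    have := congrFun h0 (Sum.inr ())
    simp at this
  · ext x
    have := congrFun hc (Sum.elim f (fun _ => r) x)
    simp only [Finset.sum_apply, Pi.smul_apply, smul_eq_mul] at this
    simp [Matrix.mulVec, dotProduct, dMat, ← this]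
    rw [add_neg_eq_zero]
    exact Finset.sum_congr rfl fun _ _ => mul_comm _ _

lemma det_bound {ι : Type*} [Fintype ι] [DecidableEq ι] (B : Matrix ι ι ℤ) (b : ι → ℕ)
    (h : ∀ i j, |B i j| ≤ b j) :
    B.det.natAbs ≤ (Fintype.card ι).factorial * ∏ j, b j := by
  zify
  rw [Matrix.det_apply]
  calc |∑ σ : Equiv.Perm ι, Equiv.Perm.sign σ • ∏ i, B (σ i) i|
      ≤ ∑ σ : Equiv.Perm ι, |Equiv.Perm.sign σ • ∏ i, B (σ i) i| := Finset.abs_sum_le_sum_abs _ _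
    _ ≤ ∑ σ : Equiv.Perm ι, ∏ j, (b j : ℤ) := by
        apply Finset.sum_le_sum
        intro σ _
        have : |Equiv.Perm.sign σ • ∏ i, B (σ i) i| = ∏ i, |B (σ i) i| := by
          rw [← Finset.abs_prod]
          rcases Int.units_eq_one_or (Equiv.Perm.sign σ) with h | h <;> simp [h]
        rw [this]
        exact Finset.prod_le_prod (fun _ _ => abs_nonneg _) (fun i _ => h _ _)
    _ = _ := by simp [Fintype.card_perm]

lemma primes_bound (N lam K : ℕ) (hN : N ≠ 0) (hl : 2 ≤ lam) (h : N ≤ lam ^ K) :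
    (N.primeFactors.filter (lam ≤ ·)).card ≤ K := by
  have h1 : lam ^ (N.primeFactors.filter (lam ≤ ·)).card
      ≤ ∏ p ∈ N.primeFactors.filter (lam ≤ ·), p :=
    Finset.pow_card_le_prod _ _ _ (by simp)
  have h2 : ∏ p ∈ N.primeFactors.filter (lam ≤ ·), p ≤ N := by
    apply Nat.le_of_dvd (Nat.pos_of_ne_zero hN)
    apply Finset.prod_primes_dvd
    · intro a ha; simp at ha; exact ha.1.1.prime
    · intro a ha; simp at ha; exact ha.1.2.1
  exact (Nat.pow_le_pow_iff_right (by omega)).1 ((h1.trans h2).trans h)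

lemma count1 {n lam p : ℕ} (hp : 0 < p) (s : Finset (Fin n → ℕ))
    (hs : s ⊆ Fintype.piFinset (fun _ => Finset.range lam)) (T : Finset (Fin n))
    (h : ∀ R ∈ s, ∀ R' ∈ s, (∀ i ∉ T, R i = R' i) → ∀ r ∈ T, R r ≡ R' r [MOD p]) :
    s.card ≤ ((lam + p - 1) / p) ^ T.card * lam ^ (n - T.card) := by
  have h1 : s.card ≤ (Fintype.piFinset (fun i => if i ∈ T then
      Finset.range ((lam + p - 1) / p) else Finset.range lam)).card := by
    apply Finset.card_le_card_of_injOn (fun R i => if i ∈ T then R i / p else R i)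
    · intro R hR
      have := hs hR
      simp only [Fintype.mem_piFinset, Finset.mem_range, Finset.mem_coe] at this ⊢
      intro i
      have hi := this i
      split_ifs
      · rw [Finset.mem_range, Nat.lt_iff_add_one_le, Nat.le_div_iff_mul_le hp]
        have := Nat.div_mul_le_self (R i) p
        rw [add_mul]; omega
      · simpa using hi
    · intro R hR R' hR' he
      have he' := fun i => congrFun he i
      simp only at he'
      have hout : ∀ i ∉ T, R i = R' i := by
        intro i hi; have := he' i; simpa [hi] using this
      ext i
      by_cases hi : i ∈ T
      · have h2 := h R hR R' hR' hout i hi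
        have h3 := he' i
        simp only [hi, if_true] at h3
        rw [← Nat.div_add_mod (R i) p, ← Nat.div_add_mod (R' i) p, h3, h2]
      · exact hout i hi
  refine h1.trans_eq ?_
  rw [Fintype.card_piFinset]
  have : ∀ i, (if i ∈ T then Finset.range ((lam + p - 1) / p) else Finset.range lam).card
      = if i ∈ T then ((lam + p - 1) / p) else lam := by
    intro i; split_ifs <;> simp
  simp only [this]
  rw [Finset.prod_ite]
  simp [Finset.filter_not, Finset.card_sdiff]

def vv {n : ℕ} (u : Fin n → ℤ) (a : ℤ) (R : Fin n → ℕ) : Fin n → ℤ := fun i => u i + a * R i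

def Dep {n : ℕ} {ι : Type*} (C : Matrix (Fin n) ι ℤ) (v : Fin n → ℤ) (p : ℕ) : Prop :=
  (fun i => (v i : ZMod p)) ∈ Submodule.span (ZMod p)
      (Set.range (fun (k : ι) (i : Fin n) => (C i k : ZMod p)))

def LI {n : ℕ} {ι : Type*} (C : Matrix (Fin n) ι ℤ) (p : ℕ) : Prop :=
  LinearIndependent (ZMod p) (fun (k : ι) (i : Fin n) => (C i k : ZMod p))

abbrev box (n lam : ℕ) : Finset (Fin n → ℕ) := Fintype.piFinset (fun _ => Finset.range lam)

lemma dep_congr {n : ℕ} {ι : Type*} [Fintype ι] [DecidableEq ι]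
    (C : Matrix (Fin n) ι ℤ) (u : Fin n → ℤ) (a : ℤ) (p : ℕ) (hp : p.Prime)
    (ha : ¬ (p : ℤ) ∣ a) (f : ι → Fin n) (hf : ¬ (p : ℤ) ∣ (C.submatrix f id).det)
    (R R' : Fin n → ℕ) (h : Dep C (vv u a R) p) (h' : Dep C (vv u a R') p)
    (he : ∀ i, R (f i) = R' (f i)) (r : Fin n) : R r ≡ R' r [MOD p] := by
  have h1 := dvd_sub (dMat_dvd C _ f r p hp h) (dMat_dvd C _ f r p hp h')
  rw [dMat_sub _ _ _ _ _ (by intro i; simp [vv, he])] at h1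
  have hpp := Nat.prime_iff_prime_int.1 hp
  have h2 := (hpp.dvd_or_dvd h1).resolve_left hf
  have h3 : vv u a R r - vv u a R' r = a * ((R r : ℤ) - R' r) := by simp [vv]; ring
  rw [h3] at h2
  have h4 := (hpp.dvd_or_dvd h2).resolve_left ha
  exact ((Nat.modEq_iff_dvd).2 (by simpa using h4)).symm

lemma LI_minor {n : ℕ} {ι : Type*} [Fintype ι] [DecidableEq ι]
    (C : Matrix (Fin n) ι ℤ) (p : ℕ) (hp : p.Prime) (h : LI C p) :
    ∃ f : ι → Fin n, ¬ (p : ℤ) ∣ (C.submatrix f id).det := by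
  have := Fact.mk hp
  obtain ⟨f, hf⟩ := exists_minor (C.map (Int.cast : ℤ → ZMod p)) h
  refine ⟨f, ?_⟩
  rw [← ZMod.intCast_zmod_eq_zero_iff_dvd, Int.cast_det]
  exact hf

lemma minor_inj {n : ℕ} {ι : Type*} [Fintype ι] [DecidableEq ι]
    (C : Matrix (Fin n) ι ℤ) (f : ι → Fin n) (h : (C.submatrix f id).det ≠ 0) :
    Function.Injective f := by
  intro i j hij
  by_contra hne
  exact h (Matrix.det_zero_of_row_eq hne (by ext k; simp [hij]))

open Classical in
lemma count_prime {n lam : ℕ} {ι : Type*} [Fintype ι]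
    (C : Matrix (Fin n) ι ℤ) (u : Fin n → ℤ) (a : ℤ) (p : ℕ) (hp : p.Prime) (ha : ¬ (p : ℤ) ∣ a)
    (hC : LI C p) :
    ((box n lam).filter (fun R => Dep C (vv u a R) p)).card ≤
      ((lam + p - 1) / p) ^ (n - Fintype.card ι) * lam ^ (Fintype.card ι) := by
  obtain ⟨f, hf⟩ := LI_minor C p hp hC
  have hinj := minor_inj C f (by intro h0; simp [h0] at hf)
  have hcard : Fintype.card ι ≤ n := by simpa using Fintype.card_le_of_injective f hinj
  have hT : (Finset.univ \ Finset.univ.image f).card = n - Fintype.card ι := by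
    rw [Finset.card_sdiff_of_subset (Finset.subset_univ _), Finset.card_image_of_injective _ hinj]
    simp
  have := count1 (lam := lam) hp.pos ((box n lam).filter (fun R => Dep C (vv u a R) p))
    (Finset.filter_subset _ _) (Finset.univ \ Finset.univ.image f) (by
      intro R hR R' hR' he r _
      exact dep_congr C u a p hp ha f hf R R' (Finset.mem_filter.1 hR).2 (Finset.mem_filter.1 hR').2
        (fun i => he _ (by simp)) r)
  rw [hT] at this
  rwa [Nat.sub_sub_self hcard] at this

lemma ceil_one {lam p : ℕ} (h0 : 0 < lam) (h : lam ≤ p) : (lam + p - 1) / p = 1 := by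
  apply Nat.div_eq_of_lt_le <;> omega

open Classical in
lemma stage {n lam K : ℕ} (hl : 2 ≤ lam) {ι : Type*} [Fintype ι]
    (C : Matrix (Fin n) ι ℤ) (u : Fin n → ℤ) (a : ℤ) (ha : a ≠ 0) (ha2 : 2 ∣ a)
    (hd : Fintype.card ι + 2 ≤ n)
    (b : ι → ℕ) (b0 : ℕ) (hb0 : 1 ≤ b0) (hb : ∀ i k, |C i k| ≤ b k)
    (hv : ∀ R ∈ box n lam, ∀ i, |vv u a R i| ≤ b0)
    (hK : (Fintype.card ι + 1).factorial * ((∏ k, b k) * b0) ≤ lam ^ K) :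
    ((box n lam).filter (fun R => ∃ p : ℕ, p.Prime ∧ ¬ (p : ℤ) ∣ a ∧ LI C p ∧
      Dep C (vv u a R) p)).card ≤
      (∑ p ∈ (Finset.range lam).filter (fun p => 3 ≤ p ∧ p % 2 = 1),
        ((lam + p - 1) / p) ^ (n - Fintype.card ι) * lam ^ (Fintype.card ι))
      + lam ^ (n - 1) + K * lam ^ (Fintype.card ι + 1) + K * lam ^ (Fintype.card ι) := by
  by_cases hf : ∃ f : ι → Fin n, (C.submatrix f id).det ≠ 0
  swap
  · push Not at hf
    rw [Finset.filter_false_of_mem]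
    · simp
    · rintro R _ ⟨p, hp, _, h, _⟩
      obtain ⟨f, h⟩ := LI_minor C p hp h
      simp [hf f] at h
  obtain ⟨f, hf⟩ := hf
  have hinj := minor_inj C f hf
  obtain ⟨r, hr⟩ : ∃ r, r ∉ Finset.univ.image f := by
    by_contra hcon
    push Not at hcon
    have h1 : (Finset.univ : Finset (Fin n)) ⊆ Finset.univ.image f := fun x _ => hcon x
    have := Finset.card_le_card h1
    rw [Finset.card_image_of_injective _ hinj] at this
    simp at this; omega
  set D := (C.submatrix f id).det with hD
  have hDb : D.natAbs ≤ lam ^ K := by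
    refine (det_bound _ b (fun i j => hb _ _)).trans (le_trans ?_ hK)
    exact Nat.mul_le_mul (Nat.factorial_le (by omega)) (Nat.le_mul_of_pos_right _ hb0)
  have hdb : ∀ R ∈ box n lam, (dMat C (vv u a R) f r).det.natAbs ≤ lam ^ K := by
    intro R hR
    refine (det_bound _ (Sum.elim b (fun _ => b0)) ?_).trans (le_trans (le_of_eq ?_) hK)
    · intro x y
      rcases y with y | y
      · simpa [dMat] using hb _ _
      · simpa [dMat] using hv R hR _
    · simp
  -- the pieces
  let P1 := ((Finset.range lam).filter (fun p => 3 ≤ p ∧ p % 2 = 1)).biUnion (fun p =>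
    if p.Prime ∧ ¬ (p : ℤ) ∣ a ∧ LI C p then
      (box n lam).filter (fun R => Dep C (vv u a R) p) else ∅)
  let P2 := (box n lam).filter (fun R => (dMat C (vv u a R) f r).det = 0)
  let P3 := (box n lam).filter (fun R => (dMat C (vv u a R) f r).det ≠ 0 ∧
    ∃ p : ℕ, p.Prime ∧ lam ≤ p ∧ ¬ (p : ℤ) ∣ a ∧ ¬ (p : ℤ) ∣ D ∧ Dep C (vv u a R) p)
  let P4 := (D.natAbs.primeFactors.filter (lam ≤ ·)).biUnion (fun p =>
    if p.Prime ∧ ¬ (p : ℤ) ∣ a ∧ LI C p then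
      (box n lam).filter (fun R => Dep C (vv u a R) p) else ∅)
  have hsub : ((box n lam).filter (fun R => ∃ p : ℕ, p.Prime ∧ ¬ (p : ℤ) ∣ a ∧ LI C p ∧
      Dep C (vv u a R) p)) ⊆ P1 ∪ P2 ∪ P3 ∪ P4 := by
    intro R hR
    obtain ⟨hRb, p, hp, hpa, hpC, hpd⟩ := Finset.mem_filter.1 hR
    have hp2 : p ≠ 2 := by rintro rfl; exact hpa (by exact_mod_cast ha2)
    have hmem : R ∈ (if p.Prime ∧ ¬ (p : ℤ) ∣ a ∧ LI C p then
      (box n lam).filter (fun R => Dep C (vv u a R) p) else ∅) := by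
      rw [if_pos ⟨hp, hpa, hpC⟩]; exact Finset.mem_filter.2 ⟨hRb, hpd⟩
    simp only [Finset.mem_union]
    by_cases hpl : p < lam
    · left; left; left
      refine Finset.mem_biUnion.2 ⟨p, ?_, hmem⟩
      have h1 := hp.two_le
      have h2 := hp.eq_two_or_odd
      simp only [Finset.mem_filter, Finset.mem_range]
      omega
    · push Not at hpl
      by_cases h0 : (dMat C (vv u a R) f r).det = 0
      · left; left; right
        exact Finset.mem_filter.2 ⟨hRb, h0⟩
      by_cases hpD : (p : ℤ) ∣ D
      · right
        refine Finset.mem_biUnion.2 ⟨p, ?_, hmem⟩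
        simp only [Finset.mem_filter, Nat.mem_primeFactors]
        exact ⟨⟨hp, Int.natCast_dvd.1 hpD, by simpa using hf⟩, hpl⟩
      · left; right
        exact Finset.mem_filter.2 ⟨hRb, h0, p, hp, hpl, hpa, hpD, hpd⟩
  have h1 : P1.card ≤ ∑ p ∈ (Finset.range lam).filter (fun p => 3 ≤ p ∧ p % 2 = 1),
        ((lam + p - 1) / p) ^ (n - Fintype.card ι) * lam ^ (Fintype.card ι) := by
    refine Finset.card_biUnion_le.trans (Finset.sum_le_sum ?_)
    intro p _
    split_ifs with hc
    · exact count_prime C u a p hc.1 hc.2.1 hc.2.2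
    · simp
  have h2 : P2.card ≤ lam ^ (n - 1) := by
    have := count1 (lam := lam) (p := lam) (by omega) P2 (Finset.filter_subset _ _) {r} (by
      intro R hR R' hR' he x hx
      rw [Finset.mem_singleton] at hx
      subst hx
      have h := dMat_sub C (vv u a R) (vv u a R') f x (by
        intro i
        have : f i ≠ x := by rintro rfl; simp at hr
        simp [vv, he (f i) (by simpa using this)])
      rw [(Finset.mem_filter.1 hR).2, (Finset.mem_filter.1 hR').2] at h
      have h3 : vv u a R x - vv u a R' x = a * ((R x : ℤ) - R' x) := by simp [vv]; ring
      rw [h3, sub_zero, eq_comm, mul_eq_zero, mul_eq_zero] at h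
      have h4 := (h.resolve_left hf).resolve_left ha
      have : R x = R' x := by omega
      rw [this])
    rw [ceil_one (by omega) le_rfl] at this
    simpa using this
  have h4 : P4.card ≤ K * lam ^ (Fintype.card ι) := by
    refine Finset.card_biUnion_le.trans ((Finset.sum_le_card_nsmul _ _ (lam ^ Fintype.card ι) ?_).trans ?_)
    · intro p hp
      simp only [Finset.mem_filter] at hp
      split_ifs with hc
      · have := count_prime (lam := lam) C u a p hc.1 hc.2.1 hc.2.2
        rw [ceil_one (by omega) hp.2] at this
        simpa using this
      · simp
    · rw [smul_eq_mul]
      exact Nat.mul_le_mul_right _ (primes_bound _ _ _ (by simpa using hf) hl hDb)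
  have h3 : P3.card ≤ K * lam ^ (Fintype.card ι + 1) := by
    let J := insert r (Finset.univ.image f)
    let g : (Fin n → ℕ) → (Fin n → ℕ) := fun R i => if i ∈ J then R i else 0
    have himg : (P3.image g).card ≤ lam ^ (Fintype.card ι + 1) := by
      have hs : P3.image g ⊆ Fintype.piFinset (fun i => if i ∈ J then Finset.range lam else {0}) := by
        intro x hx
        obtain ⟨R, hR, rfl⟩ := Finset.mem_image.1 hx
        have := (Finset.mem_filter.1 hR).1
        simp only [Fintype.mem_piFinset, Finset.mem_range] at this ⊢
        intro i
        by_cases hi : i ∈ J <;> simp [g, hi, this i]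
      refine (Finset.card_le_card hs).trans (le_of_eq ?_)
      rw [Fintype.card_piFinset]
      have : ∀ i, (if i ∈ J then Finset.range lam else {0}).card = if i ∈ J then lam else 1 := by
        intro i; split_ifs <;> simp
      simp only [this]
      rw [Finset.prod_ite]
      simp only [Finset.prod_const, Finset.prod_const_one, mul_one, Finset.filter_univ_mem]
      rw [Finset.card_insert_of_notMem hr, Finset.card_image_of_injective _ hinj]
      simp
    refine (Finset.card_le_mul_card_image (f := g) P3 K ?_).trans (Nat.mul_le_mul_left _ himg)
    intro y hy
    obtain ⟨R0, hR0, rfl⟩ := Finset.mem_image.1 hy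
    have hR0' := Finset.mem_filter.1 hR0
    have hex : ∀ R : Fin n → ℕ, ∃ p : ℕ, R ∈ P3 → p.Prime ∧ lam ≤ p ∧ ¬ (p : ℤ) ∣ a ∧
        ¬ (p : ℤ) ∣ D ∧ Dep C (vv u a R) p := by
      intro R
      by_cases hR : R ∈ P3
      · obtain ⟨p, hp⟩ := (Finset.mem_filter.1 hR).2.2
        exact ⟨p, fun _ => hp⟩
      · exact ⟨0, fun h => absurd h hR⟩
    choose q hq using hex
    have hag : ∀ R R', g R = g R' → ∀ i ∈ J, R i = R' i := by
      intro R R' h i hi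
      have := congrFun h i
      simpa [g, hi] using this
    refine le_trans ?_ (primes_bound (dMat C (vv u a R0) f r).det.natAbs lam K
      (by simpa using hR0'.2.1) hl (hdb R0 hR0'.1))
    apply Finset.card_le_card_of_injOn q
    · intro R hR
      rw [Finset.mem_coe, Finset.mem_filter] at hR
      obtain ⟨hp, hpl, hpa, hpD, hdep⟩ := hq R hR.1
      have hdet : (dMat C (vv u a R0) f r).det = (dMat C (vv u a R) f r).det := by
        have := dMat_sub C (vv u a R0) (vv u a R) f r (by
          intro i; simp [vv, hag R R0 hR.2 (f i) (by simp [J])])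
        rw [← sub_eq_zero, this]
        simp [vv, hag R R0 hR.2 r (by simp [J])]
      simp only [Finset.mem_coe, Finset.mem_filter, Nat.mem_primeFactors]
      refine ⟨⟨hp, ?_, by simpa using hR0'.2.1⟩, hpl⟩
      rw [hdet]
      exact Int.natCast_dvd.1 (dMat_dvd C _ f r _ hp hdep)
    · intro R hR R' hR' he
      rw [Finset.mem_coe, Finset.mem_filter] at hR hR'
      obtain ⟨hp, hpl, hpa, hpD, hdep⟩ := hq R hR.1
      obtain ⟨_, _, _, _, hdep'⟩ := hq R' hR'.1
      rw [← he] at hdep'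
      ext i
      have := dep_congr C u a _ hp hpa f hpD R R' hdep hdep'
        (fun i => hag R R' (hR.2.trans hR'.2.symm) _ (by simp [J])) i
      have b1 := (Finset.mem_filter.1 hR.1).1
      have b2 := (Finset.mem_filter.1 hR'.1).1
      simp only [Fintype.mem_piFinset, Finset.mem_range] at b1 b2
      exact Nat.ModEq.eq_of_lt_of_lt this ((b1 i).trans_le hpl) ((b2 i).trans_le hpl)
  have := Finset.card_le_card hsub
  have e1 := Finset.card_union_le (P1 ∪ P2 ∪ P3) P4
  have e2 := Finset.card_union_le (P1 ∪ P2) P3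
  have e3 := Finset.card_union_le P1 P2
  omega

lemma geo_le (q : ℝ) (h0 : 0 ≤ q) (h1 : q < 1) (m : ℕ) :
    ∑ j ∈ Finset.range m, q ^ j ≤ 1 / (1 - q) := by
  rw [le_div_iff₀ (by linarith), geom_sum_mul_neg]
  have := pow_nonneg h0 m
  linarith

lemma h_mono {q r : ℝ} (h0 : 0 ≤ q) (h1 : q ≤ r) (h2 : r < 1) :
    q ^ 2 * (1 / (1 - q)) ≤ r ^ 2 * (1 / (1 - r)) := by
  have : 0 < 1 - r := by linarith
  have h3 : 0 < 1 - q := by linarith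
  have h4 : 0 ≤ 1 / (1 - q) := by positivity
  gcongr

noncomputable def FF (k : ℕ) : ℝ := if k < 10 then
    (1 / (2 * k + 3 : ℝ) + 1 / 210) ^ 2 * (1 / (1 - (1 / (2 * k + 3 : ℝ) + 1 / 210)))
  else 4 / ((2 * k + 3 : ℝ) * (2 * k + 1))

lemma FF_sum (m : ℕ) : ∑ k ∈ Finset.range (10 + m), FF k ≤
    0.33 + 2 / 21 - 2 / (2 * m + 21 : ℝ) := by
  induction m with
  | zero =>
    simp [Finset.sum_range_succ, FF]
    norm_num
  | succ m ih =>
    rw [← add_assoc, Finset.sum_range_succ]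
    have : FF (10 + m) = 2 / (2 * m + 21 : ℝ) - 2 / (2 * (m + 1 : ℕ) + 21 : ℝ) := by
      rw [FF, if_neg (by omega)]
      push_cast
      have h1 : (2 * m + 21 : ℝ) ≠ 0 := by positivity
      have h2 : (2 * (m + 1) + 21 : ℝ) ≠ 0 := by positivity
      have h3 : (2 * (10 + m) + 3 : ℝ) ≠ 0 := by positivity
      have h4 : (2 * (10 + m) + 1 : ℝ) ≠ 0 := by positivity
      field_simp
      ring
    linarith

lemma FF_nonneg (k : ℕ) : 0 ≤ FF k := by
  rw [FF]
  split_ifs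
  · have : (1 / (2 * k + 3 : ℝ)) ≤ 1 / 3 := by
      apply one_div_le_one_div_of_le (by norm_num)
      have : (0 : ℝ) ≤ k := by positivity
      linarith
    have : (0 : ℝ) ≤ 1 - (1 / (2 * k + 3 : ℝ) + 1 / 210) := by linarith
    positivity
  · positivity

lemma small_one (lam m k : ℕ) (hl : 210 ≤ lam) (hk : 2 * k + 3 < lam) :
    ∑ j ∈ Finset.range m, ((((lam + (2 * k + 3) - 1) / (2 * k + 3) : ℕ) : ℝ) / lam) ^ (j + 2)
      ≤ FF k := by
  have hl' : (210 : ℝ) ≤ lam := by exact_mod_cast hl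
  have hk' : (2 * k + 3 : ℝ) < lam := by exact_mod_cast hk
  set q : ℝ := ((((lam + (2 * k + 3) - 1) / (2 * k + 3) : ℕ) : ℝ) / lam) with hq
  have hq0 : 0 ≤ q := by positivity
  have hk0 : (0 : ℝ) ≤ k := by positivity
  have hq1 : q ≤ 1 / (2 * k + 3 : ℝ) + 1 / lam := by
    have h1 : (((lam + (2 * k + 3) - 1) / (2 * k + 3) : ℕ) : ℝ) ≤ (lam + (2 * k + 3) : ℝ) / (2 * k + 3) := by
      refine Nat.cast_div_le.trans ?_
      push_cast
      gcongr
      have : ((lam + (2 * k + 3) - 1 : ℕ) : ℝ) ≤ ((lam + (2 * k + 3) : ℕ) : ℝ) := by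
        exact_mod_cast Nat.sub_le _ _
      push_cast at this
      exact this
    rw [hq, div_le_iff₀ (by linarith)]
    refine h1.trans (le_of_eq ?_)
    field_simp
    try ring
  have hx : (1 : ℝ) / lam ≤ 1 / 210 := one_div_le_one_div_of_le (by norm_num) hl'
  have h3 : (1 / (2 * k + 3 : ℝ)) ≤ 1 / 3 :=
    one_div_le_one_div_of_le (by norm_num) (by linarith)
  have hsum : ∑ j ∈ Finset.range m, q ^ (j + 2) ≤ q ^ 2 * (1 / (1 - q)) := by
    calc _ = q ^ 2 * ∑ j ∈ Finset.range m, q ^ j := by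
          rw [Finset.mul_sum]; exact Finset.sum_congr rfl fun _ _ => by ring
      _ ≤ _ := by gcongr; exact geo_le q hq0 (by linarith) m
  refine hsum.trans ?_
  rw [FF]
  split_ifs with hk10
  · exact h_mono hq0 (by linarith) (by linarith)
  · have hk10' : (10 : ℝ) ≤ k := by exact_mod_cast (by omega : 10 ≤ k)
    have hx2 : (1 : ℝ) / lam ≤ 1 / (2 * k + 3) := one_div_le_one_div_of_le (by linarith) hk'.le
    have h4 : (2 / (2 * k + 3 : ℝ)) < 1 := by rw [div_lt_one (by linarith)]; linarith
    refine (h_mono hq0 (r := 2 / (2 * k + 3 : ℝ)) ?_ h4).trans (le_of_eq ?_)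
    · have : 2 / (2 * k + 3 : ℝ) = 1 / (2 * k + 3) + 1 / (2 * k + 3) := by ring
      linarith
    · have e : 1 - 2 / (2 * k + 3 : ℝ) = (2 * k + 1) / (2 * k + 3) := by field_simp; ring
      rw [e]
      field_simp
      try ring

lemma numeric (n lam : ℕ) (hn : 2 ≤ n) (hl : 105 * n ≤ lam) :
    2 * ∑ j ∈ Finset.range (n - 1),
      ((∑ p ∈ (Finset.range lam).filter (fun p => 3 ≤ p ∧ p % 2 = 1),
        ((lam + p - 1) / p) ^ (j + 2) * lam ^ (n - (j + 2)))
      + lam ^ (n - 1) + 3 * n * lam ^ (n - (j + 2) + 1) + 3 * n * lam ^ (n - (j + 2))) < lam ^ n := by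
  have hl2 : 210 ≤ lam := by omega
  have hl' : (210 : ℝ) ≤ lam := by exact_mod_cast hl2
  have hl0 : (0 : ℝ) < lam := by linarith
  have hln : (105 * n : ℝ) ≤ lam := by exact_mod_cast hl
  have hn' : (2 : ℝ) ≤ n := by exact_mod_cast hn
  set x : ℝ := 1 / lam with hx
  have hx0 : 0 < x := by positivity
  have hx1 : x ≤ 1 / 210 := one_div_le_one_div_of_le (by norm_num) hl'
  have hnx : n * x ≤ 1 / 105 := by
    rw [hx, mul_one_div, div_le_iff₀ hl0]; linarith
  have hlx : (lam : ℝ) * x = 1 := by rw [hx]; field_simp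
  rw [← Nat.cast_lt (α := ℝ)]
  push_cast
  have key : ∀ j ∈ Finset.range (n - 1),
      ((∑ p ∈ (Finset.range lam).filter (fun p => 3 ≤ p ∧ p % 2 = 1),
        (((lam + p - 1) / p : ℕ) : ℝ) ^ (j + 2) * (lam : ℝ) ^ (n - (j + 2)))
      + (lam : ℝ) ^ (n - 1) + 3 * n * (lam : ℝ) ^ (n - (j + 2) + 1) + 3 * n * (lam : ℝ) ^ (n - (j + 2)))
      = (lam : ℝ) ^ n * ((∑ p ∈ (Finset.range lam).filter (fun p => 3 ≤ p ∧ p % 2 = 1),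
        ((((lam + p - 1) / p : ℕ) : ℝ) / lam) ^ (j + 2)) + x + 3 * n * x * x ^ j
          + 3 * n * x ^ 2 * x ^ j) := by
    intro j hj
    rw [Finset.mem_range] at hj
    have e1 : (lam : ℝ) ^ n = lam ^ (n - (j + 2)) * lam ^ (j + 2) := by
      rw [← pow_add]; congr 1; omega
    have e2 : (lam : ℝ) ^ n = lam ^ (n - 1) * lam := by
      rw [← pow_succ]; congr 1; omega
    have e3 : (lam : ℝ) ^ (j + 2) * x ^ (j + 2) = 1 := by rw [← mul_pow, hlx, one_pow]
    rw [mul_add, mul_add, mul_add, Finset.mul_sum]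
    congr 1
    · congr 1
      · congr 1
        · apply Finset.sum_congr rfl
          intro p _
          rw [e1, div_pow]; field_simp
        · rw [e2, mul_assoc, hlx, mul_one]
      · rw [e1]
        have : (lam : ℝ) ^ (n - (j + 2)) * lam ^ (j + 2) * (3 * n * x * x ^ j)
          = lam ^ (n - (j + 2)) * lam * (3 * n) * (lam ^ (j + 1) * x ^ (j + 1)) := by ring
        rw [this, ← mul_pow, hlx]; ring
    · rw [e1]
      have : (lam : ℝ) ^ (n - (j + 2)) * lam ^ (j + 2) * (3 * n * x ^ 2 * x ^ j)
          = lam ^ (n - (j + 2)) * (3 * n) * (lam ^ (j + 2) * x ^ (j + 2)) := by ring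
      rw [this, e3]; ring
  rw [Finset.sum_congr rfl key, ← Finset.mul_sum, Finset.sum_add_distrib, Finset.sum_add_distrib,
    Finset.sum_add_distrib, ← Finset.mul_sum, ← Finset.mul_sum, Finset.sum_comm]
  have hgeo := geo_le x hx0.le (by linarith) (n - 1)
  have hgeo2 : 1 / (1 - x) ≤ 210 / 209 := by
    rw [div_le_div_iff₀ (by linarith) (by norm_num)]; linarith
  have b1 : ∑ p ∈ (Finset.range lam).filter (fun p => 3 ≤ p ∧ p % 2 = 1),
      ∑ j ∈ Finset.range (n - 1), ((((lam + p - 1) / p : ℕ) : ℝ) / lam) ^ (j + 2)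
      ≤ 0.33 + 2 / 21 := by
    have hin : (Finset.range lam).filter (fun p => 3 ≤ p ∧ p % 2 = 1) ⊆
        ((Finset.range lam).filter (fun k => 2 * k + 3 < lam)).image (fun k => 2 * k + 3) := by
      intro p hp
      simp only [Finset.mem_filter, Finset.mem_range, Finset.mem_image] at hp ⊢
      exact ⟨(p - 3) / 2, by omega, by omega⟩
    refine (Finset.sum_le_sum_of_subset_of_nonneg hin
      (fun _ _ _ => Finset.sum_nonneg fun _ _ => by positivity)).trans ?_
    rw [Finset.sum_image (by intro a _ b _ h; simp at h; exact h)]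
    calc _ ≤ ∑ k ∈ (Finset.range lam).filter (fun k => 2 * k + 3 < lam), FF k :=
          Finset.sum_le_sum fun k hk => small_one lam (n - 1) k hl2 (Finset.mem_filter.1 hk).2
      _ ≤ ∑ k ∈ Finset.range (10 + (lam - 10)), FF k := by
          apply Finset.sum_le_sum_of_subset_of_nonneg
          · intro k hk; simp at hk ⊢; omega
          · intro k _ _; exact FF_nonneg k
      _ ≤ _ := by
          refine (FF_sum _).trans ?_
          have : (0 : ℝ) ≤ 2 / (2 * (lam - 10 : ℕ) + 21 : ℝ) := by positivity
          linarith
  have b2 : ∑ j ∈ Finset.range (n - 1), x ≤ 1 / 105 := by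
    rw [Finset.sum_const, Finset.card_range, nsmul_eq_mul]
    refine le_trans ?_ hnx
    gcongr
    exact Nat.sub_le _ _
  have b3 : 3 * n * x * ∑ j ∈ Finset.range (n - 1), x ^ j ≤ 3 / 105 * (210 / 209) := by
    have : 3 * n * x ≤ 3 / 105 := by linarith
    have h0 : (0 : ℝ) ≤ ∑ j ∈ Finset.range (n - 1), x ^ j := Finset.sum_nonneg fun _ _ => by positivity
    exact mul_le_mul this (hgeo.trans hgeo2) h0 (by norm_num)
  have b4 : 3 * n * x ^ 2 * ∑ j ∈ Finset.range (n - 1), x ^ j ≤ 3 / 105 * (1 / 210) * (210 / 209) := by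
    have : 3 * n * x ^ 2 ≤ 3 / 105 * (1 / 210) := by
      have : 3 * n * x ^ 2 = (3 * n * x) * x := by ring
      rw [this]
      exact mul_le_mul (by linarith) hx1 hx0.le (by norm_num)
    have h0 : (0 : ℝ) ≤ ∑ j ∈ Finset.range (n - 1), x ^ j := Finset.sum_nonneg fun _ _ => by positivity
    exact mul_le_mul this (hgeo.trans hgeo2) h0 (by norm_num)
  have hpos : (0 : ℝ) < lam ^ n := by positivity
  rw [← mul_assoc, mul_comm (2 : ℝ), mul_assoc]
  nth_rewrite 2 [← mul_one ((lam : ℝ) ^ n)]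
  apply mul_lt_mul_of_pos_left _ hpos
  norm_num at b1 b2 b3 b4 ⊢
  linarith

def CC {n : ℕ} (M : Matrix (Fin n) (Fin n) ℤ) (a : Fin n → ℤ) (G : Fin n → Fin n → ℕ) (j : Fin n) :
    Matrix (Fin n) {k : Fin n // j < k} ℤ :=
  Matrix.of fun i k => vv (fun i => M i k) (a k) (G k) i

def BadAt {n : ℕ} (M : Matrix (Fin n) (Fin n) ℤ) (a : Fin n → ℤ) (G : Fin n → Fin n → ℕ)
    (j : Fin n) (p : ℕ) : Prop :=
  p.Prime ∧ ¬ (p : ℤ) ∣ a j ∧ LI (CC M a G j) p ∧ Dep (CC M a G j) (vv (fun i => M i j) (a j) (G j)) p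

lemma exists_badAt {n : ℕ} (M W : Matrix (Fin n) (Fin n) ℤ) (a : Fin n → ℤ)
    (hdiv : ∀ i j, i ≤ j → a i ∣ a j)
    (hW : ∀ i j, a j ∣ (W * M) i j - (1 : Matrix (Fin n) (Fin n) ℤ) i j)
    (G : Fin n → Fin n → ℕ) (p : ℕ) (hp : p.Prime)
    (h : ∀ j : Fin n, 1 ≤ j.val → ¬ BadAt M a G j p) (m : ℕ) (hm : m + 1 ≤ n) :
    LinearIndepOn (ZMod p) (fun (k i : Fin n) => ((vv (fun i => M i k) (a k) (G k) i : ℤ) : ZMod p))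
      {k : Fin n | n - m ≤ k.val} := by
  have := Fact.mk hp
  induction m with
  | zero =>
    have : {k : Fin n | n - 0 ≤ k.val} = ∅ := by ext k; simp
    rw [this]; exact linearIndepOn_empty _ _
  | succ m ih =>
    have ih := ih (by omega)
    let j : Fin n := ⟨n - (m + 1), by omega⟩
    have hset : {k : Fin n | n - (m + 1) ≤ k.val} = insert j {k : Fin n | n - m ≤ k.val} := by
      ext k
      simp only [Set.mem_setOf_eq, Set.mem_insert_iff, Fin.ext_iff, j]
      omega
    have hset2 : {k : Fin n | n - m ≤ k.val} = {k : Fin n | j < k} := by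
      ext k
      simp only [Set.mem_setOf_eq, Fin.lt_def, j]
      omega
    by_cases hpj : (p : ℤ) ∣ a j
    · apply LinearIndependent.of_comp (Matrix.mulVecLin (W.map (Int.cast : ℤ → ZMod p)))
      have hli : LinearIndependent (ZMod p) (fun k : {k : Fin n | n - (m + 1) ≤ k.val} =>
          (Pi.single (k : Fin n) (1 : ZMod p) : Fin n → ZMod p)) :=
        (Pi.linearIndependent_single_one (Fin n) (ZMod p)).comp _ Subtype.val_injective
      suffices hfun : (⇑(Matrix.mulVecLin (W.map (Int.cast : ℤ → ZMod p))) ∘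
          fun k : {k : Fin n | n - (m + 1) ≤ k.val} => fun i : Fin n =>
          ((vv (fun i => M i k.1) (a k.1) (G k.1) i : ℤ) : ZMod p)) =
          (fun k : {k : Fin n | n - (m + 1) ≤ k.val} =>
          (Pi.single (k : Fin n) (1 : ZMod p) : Fin n → ZMod p)) by
        rw [← hfun] at hli
        exact hli
      funext k
      ext i
      have hjk : j ≤ k.1 := by
        have := k.2
        simp only [Set.mem_setOf_eq] at this
        simp only [Fin.le_def, j]; exact this
      have hpk : (p : ℤ) ∣ a k.1 := hpj.trans (hdiv _ _ hjk)
      have h1 := hpk.trans (hW i k.1)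
      rw [← ZMod.intCast_zmod_eq_zero_iff_dvd] at h1
      have h2 := (ZMod.intCast_zmod_eq_zero_iff_dvd (a k.1) p).2 hpk
      simp only [Function.comp, Matrix.mulVecLin_apply, Matrix.mulVec, dotProduct, vv,
        Matrix.map_apply]
      push_cast at h1
      rw [sub_eq_zero, Matrix.mul_apply] at h1
      push_cast at h1
      simp only [Int.cast_add, Int.cast_mul, h2, zero_mul, add_zero]
      rw [h1, Matrix.one_apply, Pi.single_apply]
      split_ifs <;> simp
    · rw [hset]
      apply ih.insert
      intro hmem
      apply h j (by simp only [j]; omega)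
      rw [hset2] at ih hmem
      refine ⟨hp, hpj, ih, ?_⟩
      rw [Dep]
      have hr : (Set.range (fun (k : {k : Fin n // j < k}) (i : Fin n) =>
          (CC M a G j i k : ZMod p))) =
          ((fun (k i : Fin n) => ((vv (fun i => M i k) (a k) (G k) i : ℤ) : ZMod p)) ''
            {k | j < k}) := by
        ext x
        simp [CC]
      rw [hr]
      exact hmem

open Classical in
lemma badAt_count {n lam : ℕ} (M : Matrix (Fin n) (Fin n) ℤ) (a : Fin n → ℤ) (j : Fin n) (X : ℕ)
    (hX : ∀ G ∈ Fintype.piFinset (fun _ : Fin n => box n lam),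
      ((box n lam).filter (fun R => ∃ p : ℕ, p.Prime ∧ ¬ (p : ℤ) ∣ a j ∧ LI (CC M a G j) p ∧
        Dep (CC M a G j) (vv (fun i => M i j) (a j) R) p)).card ≤ X) :
    ((Fintype.piFinset (fun _ : Fin n => box n lam)).filter
      (fun G => ∃ p, BadAt M a G j p)).card ≤ X * (lam ^ n) ^ (n - 1) := by
  let g : (Fin n → Fin n → ℕ) → (Fin n → Fin n → ℕ) := fun G => Function.update G j 0
  set Z := (Fintype.piFinset (fun _ : Fin n => box n lam)).filter
      (fun G => ∃ p, BadAt M a G j p) with hZ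
  have himg : (Z.image g).card ≤ (lam ^ n) ^ (n - 1) := by
    have hs : Z.image g ⊆ Fintype.piFinset (fun k => if k = j then {0} else box n lam) := by
      intro x hx
      obtain ⟨G, hG, rfl⟩ := Finset.mem_image.1 hx
      have := (Finset.mem_filter.1 hG).1
      rw [Fintype.mem_piFinset] at this ⊢
      intro k
      by_cases hk : k = j
      · subst hk; simp [g]
      · simp only [g, hk, if_false, Function.update_of_ne hk]; exact this k
    refine (Finset.card_le_card hs).trans (le_of_eq ?_)
    rw [Fintype.card_piFinset]
    have : ∀ k, (if k = j then ({0} : Finset (Fin n → ℕ)) else box n lam).card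
        = if k = j then 1 else lam ^ n := by
      intro k; split_ifs <;> simp [box]
    simp only [this]
    rw [Finset.prod_ite]
    simp [Finset.filter_ne']
  refine (Finset.card_le_mul_card_image (f := g) Z X ?_).trans (Nat.mul_le_mul_left _ himg)
  intro y hy
  obtain ⟨G0, hG0, rfl⟩ := Finset.mem_image.1 hy
  have hG0b := (Finset.mem_filter.1 hG0).1
  refine le_trans ?_ (hX G0 hG0b)
  have hag : ∀ G G', g G = g G' → ∀ k, k ≠ j → G k = G' k := by
    intro G G' h k hk
    have := congrFun h k
    simpa [g, Function.update_of_ne hk] using this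
  apply Finset.card_le_card_of_injOn (fun G => G j)
  · intro G hG
    rw [Finset.mem_coe, Finset.mem_filter] at hG
    obtain ⟨hGb, p, hp, hpa, hli, hdep⟩ := Finset.mem_filter.1 hG.1
    have hC : CC M a G j = CC M a G0 j := by
      ext i k
      simp [CC, hag G G0 hG.2 k.1 (ne_of_gt k.2)]
    rw [hC] at hli hdep
    rw [Finset.mem_coe, Finset.mem_filter]
    exact ⟨Fintype.mem_piFinset.1 hGb j, p, hp, hpa, hli, hdep⟩
  · intro G hG G' hG' he
    rw [Finset.mem_coe, Finset.mem_filter] at hG hG'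
    funext k
    by_cases hk : k = j
    · subst hk; exact he
    · exact hag G G' (hG.2.trans hG'.2.symm) k hk

open Classical in
lemma stage_apply {n lam : ℕ} (hl : 2 ≤ lam) (hn : n ≤ lam) (M : Matrix (Fin n) (Fin n) ℤ)
    (a : Fin n → ℤ) (ha0 : ∀ k, 0 < a k) (ha2 : ∀ k, 2 ∣ a k) (hprod : ∏ k, a k ≤ (lam : ℤ) ^ n)
    (hM : ∀ i k, 0 ≤ M i k ∧ M i k < a k) (j : Fin n) (m : ℕ) (hj : j.val = m + 1)
    (G : Fin n → Fin n → ℕ) (hG : G ∈ Fintype.piFinset (fun _ : Fin n => box n lam)) :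
    ((box n lam).filter (fun R => ∃ p : ℕ, p.Prime ∧ ¬ (p : ℤ) ∣ a j ∧ LI (CC M a G j) p ∧
        Dep (CC M a G j) (vv (fun i => M i j) (a j) R) p)).card ≤
    (∑ p ∈ (Finset.range lam).filter (fun p => 3 ≤ p ∧ p % 2 = 1),
        ((lam + p - 1) / p) ^ (m + 2) * lam ^ (n - (m + 2)))
      + lam ^ (n - 1) + 3 * n * lam ^ (n - (m + 2) + 1) + 3 * n * lam ^ (n - (m + 2)) := by
  have hjn := j.isLt
  have hcard : Fintype.card {k : Fin n // j < k} = n - (m + 2) := by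
    rw [Fintype.card_subtype]
    have : (Finset.univ.filter (fun k => j < k)) = Finset.Ioi j := by ext; simp
    rw [this, Fin.card_Ioi]; omega
  have haN : ∀ k, ((a k).toNat : ℤ) = a k := fun k => Int.toNat_of_nonneg (ha0 k).le
  have hvb : ∀ k, ∀ R ∈ box n lam, ∀ i, |vv (fun i => M i k) (a k) R i| ≤ (((a k).toNat * lam : ℕ) : ℤ) := by
    intro k R hR i
    have hRi : R i < lam := by simpa using Fintype.mem_piFinset.1 hR i
    have h1 := hM i k
    have h2 := ha0 k
    push_cast
    rw [haN]
    have h3 : (R i : ℤ) + 1 ≤ lam := by exact_mod_cast hRi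
    have h4 : (0 : ℤ) ≤ R i := by positivity
    have h5 : a k * (R i + 1) ≤ a k * lam := mul_le_mul_of_nonneg_left h3 h2.le
    have h6 : 0 ≤ a k * (R i : ℤ) := by positivity
    simp only [vv]
    rw [abs_of_nonneg (by linarith)]
    linarith
  have := stage (K := 3 * n) hl (CC M a G j) (fun i => M i j) (a j) (ha0 j).ne' (ha2 j)
    (by rw [hcard]; omega) (fun k => (a k.1).toNat * lam) ((a j).toNat * lam)
    (by have := haN j; have := ha0 j; have : 0 < (a j).toNat := by omega
        exact Nat.mul_pos this (by omega))
    (by intro i k; exact hvb k.1 (G k.1) (Fintype.mem_piFinset.1 hG k.1) i)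
    (hvb j) (by
      rw [hcard]
      have hf : (n - (m + 2) + 1).factorial ≤ lam ^ n := by
        calc _ ≤ n.factorial := Nat.factorial_le (by omega)
          _ ≤ n ^ n := Nat.factorial_le_pow n
          _ ≤ lam ^ n := Nat.pow_le_pow_left hn n
      have hpr : (∏ k : {k : Fin n // j < k}, (a k.1).toNat) * (a j).toNat ≤ lam ^ n := by
        have e1 : (∏ k : {k : Fin n // j < k}, (a k.1).toNat) = ∏ k ∈ Finset.Ioi j, (a k).toNat :=
          (Finset.prod_subtype (Finset.Ioi j) (by simp) (fun k => (a k).toNat)).symm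
        rw [e1, mul_comm, ← Finset.prod_insert (f := fun k => (a k).toNat) (by simp)]
        have e2 : ∏ k ∈ insert j (Finset.Ioi j), (a k).toNat ≤ ∏ k, (a k).toNat := by
          apply Finset.prod_le_prod_of_subset_of_one_le' (Finset.subset_univ _)
          intro k _ _
          have := ha0 k; omega
        refine e2.trans ?_
        zify
        simp only [haN]
        exact hprod
      rw [Finset.prod_mul_distrib]
      simp only [Finset.prod_const, Finset.card_univ, hcard]
      have hlp : lam ^ (n - (m + 2)) * lam ≤ lam ^ n := by
        rw [← pow_succ]; exact Nat.pow_le_pow_right (by omega) (by omega)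
      calc _ = (n - (m + 2) + 1).factorial *
            (((∏ k : {k : Fin n // j < k}, (a k.1).toNat) * (a j).toNat) *
              (lam ^ (n - (m + 2)) * lam)) := by ring
        _ ≤ lam ^ n * (lam ^ n * lam ^ n) :=
            Nat.mul_le_mul hf (Nat.mul_le_mul hpr hlp)
        _ = _ := by rw [← pow_add, ← pow_add]; congr 1; ring)
  rw [hcard] at this
  have e : n - (n - (m + 2)) = m + 2 := by omega
  rw [e] at this
  exact this

theorem perturbed_massager_bad_count_lt_half {n : ℕ}
    (A S M : Matrix (Fin n) (Fin n) ℤ) (hA : A.det ≠ 0)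
    (hS : IsSmithForm A S)
    (hM : IsSmithMassager ((2 : ℤ) • A) ((2 : ℤ) • S) M)
    (hMred : ∀ i j, 0 ≤ M i j ∧ M i j < 2 * S j j)
    (t : ℕ) (ht : IsLeast {t : ℕ | 0 < t ∧ ((2 : ℤ) • S).det ≤ (t : ℤ) ^ n} t)
    (lam : ℕ) (hlam : lam = 105 * max n t) :
    2 * Nat.card {R : Matrix (Fin n) (Fin n) ℤ //
        (∀ i j, 0 ≤ R i j ∧ R i j < (lam : ℤ)) ∧
        ∃ p : ℕ, p.Prime ∧ ¬ LinearIndependent (ZMod p)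
          (fun j : Fin (n - 1) => fun i : Fin n =>
            (((M + (2 : ℤ) • (R * S)) i
              ⟨j.val + 1, by have := j.isLt; omega⟩ : ℤ) : ZMod p))} <
      lam ^ (n * n) := by
  classical
  have ht0 : 0 < t := ht.1.1
  have hmx1 : n ≤ max n t := le_max_left _ _
  have hmx2 : t ≤ max n t := le_max_right _ _
  have hlam0 : 0 < lam := by omega
  by_cases hn : n < 2
  · have : IsEmpty (Fin (n - 1)) := by
      have : n - 1 = 0 := by omega
      rw [this]; infer_instance
    rw [Nat.card_eq_zero.2]
    · positivity
    · left
      constructor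
      rintro ⟨R, _, p, hp, hli⟩
      exact hli linearIndependent_empty_type
  push Not at hn
  obtain ⟨hSd, hSpos, hSdvd, -⟩ := hS
  obtain ⟨-, W, hW⟩ := hM
  let a : Fin n → ℤ := fun k => 2 * S k k
  have hdiag : S = Matrix.diagonal (fun k => S k k) := by
    ext i j
    by_cases h : i = j
    · subst h; simp
    · simp [h, hSd i j h]
  have hprod : ∏ k, a k ≤ (lam : ℤ) ^ n := by
    have h1 := ht.1.2
    have h2 : ((2 : ℤ) • S).det = ∏ k, a k := by
      rw [hdiag, ← Matrix.diagonal_smul, Matrix.det_diagonal]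
      simp [a]
    rw [h2] at h1
    refine h1.trans ?_
    have : t ≤ lam := by omega
    gcongr
  let Z : Fin (n - 1) → Finset (Fin n → Fin n → ℕ) := fun m =>
    (Fintype.piFinset (fun _ : Fin n => box n lam)).filter
      (fun G => ∃ p, BadAt M a G ⟨m.val + 1, by have := m.isLt; omega⟩ p)
  have hle : Nat.card {R : Matrix (Fin n) (Fin n) ℤ //
        (∀ i j, 0 ≤ R i j ∧ R i j < (lam : ℤ)) ∧
        ∃ p : ℕ, p.Prime ∧ ¬ LinearIndependent (ZMod p)
          (fun j : Fin (n - 1) => fun i : Fin n =>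
            (((M + (2 : ℤ) • (R * S)) i
              ⟨j.val + 1, by have := j.isLt; omega⟩ : ℤ) : ZMod p))} ≤
      (Finset.univ.biUnion Z).card := by
    have hcc : (Finset.univ.biUnion Z).card =
        Nat.card ((Finset.univ.biUnion Z : Finset _) : Set (Fin n → Fin n → ℕ)) := by
      rw [Nat.card_coe_set_eq, Set.ncard_coe_finset]
    rw [hcc]
    have hfin : Finite ((Finset.univ.biUnion Z : Finset _) : Set (Fin n → Fin n → ℕ)) :=
      Finset.finite_toSet _
    refine Nat.card_le_card_of_injective (fun R => ⟨fun j i => (R.1 i j).toNat, ?_⟩) ?_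
    · obtain ⟨R, hR, p, hp, hli⟩ := R
      set G : Fin n → Fin n → ℕ := fun j i => (R i j).toNat with hGdef
      have hGb : G ∈ Fintype.piFinset (fun _ : Fin n => box n lam) := by
        simp only [Fintype.mem_piFinset, Finset.mem_range, G]
        intro j i
        have := hR i j
        omega
      by_contra hcon
      apply hli
      have hnb : ∀ j : Fin n, 1 ≤ j.val → ¬ BadAt M a G j p := by
        intro j hj hb
        apply hcon
        rw [Finset.mem_coe, Finset.mem_biUnion]
        have hjn := j.isLt
        refine ⟨⟨j.val - 1, by omega⟩, Finset.mem_univ _, Finset.mem_filter.2 ⟨hGb, p, ?_⟩⟩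
        have : (⟨j.val - 1 + 1, by omega⟩ : Fin n) = j := by ext; simp; omega
        simp only [this]
        exact hb
      have hLI := exists_badAt M W a (fun i j h => mul_dvd_mul_left 2 (hSdvd i j h))
        (by intro i j; simpa [a] using hW i j) G p hp hnb (n - 1) (by omega)
      have hc := LinearIndependent.comp hLI (fun m : Fin (n - 1) =>
        (⟨⟨m.val + 1, by have := m.isLt; omega⟩, by simp; omega⟩ : {k : Fin n | n - (n - 1) ≤ k.val}))
        (by intro x y hxy; simpa [Fin.ext_iff] using hxy)
      convert hc using 1
      funext m i
      simp only [Function.comp, vv, a, G]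
      congr 1
      have hR0 := (hR i ⟨m.val + 1, by have := m.isLt; omega⟩).1
      rw [hdiag]
      simp only [Matrix.add_apply, Matrix.smul_apply, Matrix.mul_diagonal, smul_eq_mul,
        Matrix.diagonal_apply_eq, Int.toNat_of_nonneg hR0]
      ring
    · rintro ⟨R, hR, _⟩ ⟨R', hR', _⟩ h
      ext i j
      have := congrFun (congrFun (congrArg Subtype.val h) j) i
      simp only at this ⊢
      have h1 := (hR i j).1
      have h2 := (hR' i j).1
      omega
  have hcnt : (Finset.univ.biUnion Z).card ≤ (∑ m ∈ Finset.range (n - 1),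
      ((∑ p ∈ (Finset.range lam).filter (fun p => 3 ≤ p ∧ p % 2 = 1),
        ((lam + p - 1) / p) ^ (m + 2) * lam ^ (n - (m + 2)))
      + lam ^ (n - 1) + 3 * n * lam ^ (n - (m + 2) + 1) + 3 * n * lam ^ (n - (m + 2)))) *
        (lam ^ n) ^ (n - 1) := by
    rw [Finset.sum_mul, Finset.sum_range]
    refine Finset.card_biUnion_le.trans (Finset.sum_le_sum ?_)
    intro m _
    apply badAt_count
    intro G hG
    exact stage_apply (by omega) (by omega) M a (fun k => by have := hSpos k; simp only [a]; omega)
      (fun k => Dvd.intro _ rfl) hprod hMred _ m.val rfl G hG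
  have hnum := numeric n lam hn (by omega)
  calc _ ≤ 2 * _ := Nat.mul_le_mul_left 2 (hle.trans hcnt)
    _ = _ := (mul_assoc _ _ _).symm
    _ < lam ^ n * (lam ^ n) ^ (n - 1) := Nat.mul_lt_mul_of_pos_right hnum (by positivity)
    _ = lam ^ (n * n) := by
      rw [← pow_succ', ← pow_mul]; congr 2; omega
end

section
/- Let A ∈ ℤ^{n×n} be nonsingular with Smith form S = diag(s_1,…,s_n). Let M ∈ ℤ^{n×n} satisfy 0 ≤ M_{ij} < 2s_j for all i, j, and let R ∈ ℤ^{n×n} satisfy 0 ≤ R_{ij} ≤ λ−1 for all i, j, where λ is a positive integer with λ ≥ n and λ^n ≥ det(2S). Set B = M + 2RS. Then every minor of B (the determinant of any square submatrix of B obtained by selecting equally many rows and columns) has absolute value at most λ^{5n/2}; equivalently, the square of any minor of B is at most λ^{5n}. -/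
open Matrix

lemma hadamard_real {m : ℕ} (X : Matrix (Fin m) (Fin m) ℝ) :
    |X.det| ≤ ∏ j, ‖(WithLp.toLp 2 (fun i => X i j) : EuclideanSpace ℝ (Fin m))‖ := by
  have : Fact (Module.finrank ℝ (EuclideanSpace ℝ (Fin m)) = m) := ⟨by simp⟩
  let b := EuclideanSpace.basisFun (Fin m) ℝ
  have h := b.toBasis.orientation.abs_volumeForm_apply_le
    (fun j => (WithLp.toLp 2 (fun i => X i j) : EuclideanSpace ℝ (Fin m)))
  rw [Orientation.volumeForm_robust _ b rfl, Module.Basis.det_apply] at h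
  have e : b.toBasis.toMatrix
    (fun j => (WithLp.toLp 2 (fun i => X i j) : EuclideanSpace ℝ (Fin m))) = X := by
    ext i j
    simp [Module.Basis.toMatrix_apply, b]
  rwa [e] at h

lemma hadamard_sq {m : ℕ} (X : Matrix (Fin m) (Fin m) ℤ) :
    X.det ^ 2 ≤ ∏ j, ∑ i, X i j ^ 2 := by
  have h := hadamard_real (X.map (Int.cast : ℤ → ℝ))
  have h2 := pow_le_pow_left₀ (abs_nonneg _) h 2
  rw [sq_abs, ← Finset.prod_pow] at h2
  simp only [EuclideanSpace.norm_sq_eq, Matrix.map_apply, Real.norm_eq_abs, sq_abs] at h2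
  have e : (X.map (Int.cast : ℤ → ℝ)).det = (X.det : ℝ) := by
    have := (Int.castRingHom ℝ).map_det X
    simpa using this.symm
  rw [e] at h2
  exact_mod_cast h2

/-- Every minor of `B = M + 2RS` is bounded in magnitude by `λ^{5n/2}`;
equivalently, the square of any minor is at most `λ^{5n}`. -/
theorem minor_sq_le_of_perturbed_massager {n : ℕ}
    (A S M R : Matrix (Fin n) (Fin n) ℤ) (hA : A.det ≠ 0)
    (hS : IsSmithForm A S)
    (hMred : ∀ i j, 0 ≤ M i j ∧ M i j < 2 * S j j)
    (lam : ℕ) (hlam_n : n ≤ lam) (hlam_det : ((2 : ℤ) • S).det ≤ (lam : ℤ) ^ n)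
    (hR : ∀ i j, 0 ≤ R i j ∧ R i j ≤ (lam : ℤ) - 1) :
    ∀ (m : ℕ) (r c : Fin m → Fin n), Function.Injective r → Function.Injective c →
      (((M + (2 : ℤ) • (R * S)).submatrix r c).det) ^ 2 ≤ (lam : ℤ) ^ (5 * n) := by
  intro m r c hr hc
  obtain ⟨hoff, hpos, -, -⟩ := hS
  have hmn : m ≤ n := by simpa using Fintype.card_le_of_injective c hc
  rcases Nat.eq_zero_or_pos n with h0 | hn
  · have hm : m = 0 := by omega
    subst h0
    subst hm
    simp
  have hl : (1 : ℤ) ≤ lam := by exact_mod_cast hn.trans_le hlam_n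
  have hSd : S = Matrix.diagonal (fun i => S i i) := by
    ext i j
    by_cases h : i = j
    · subst h; simp
    · rw [Matrix.diagonal_apply_ne _ h, hoff i j h]
  have hRS : ∀ i j, (R * S) i j = R i j * S j j := by
    intro i j
    conv_lhs => rw [hSd]
    rw [Matrix.mul_diagonal]
  have hdet : ((2 : ℤ) • S).det = ∏ i, (2 * S i i) := by
    conv_lhs => rw [hSd]
    rw [← Matrix.diagonal_smul, Matrix.det_diagonal]
    simp
  have hB : ∀ i j, 0 ≤ (M + (2 : ℤ) • (R * S)) i j ∧
      (M + (2 : ℤ) • (R * S)) i j ≤ lam * (2 * S j j) := by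
    intro i j
    simp only [Matrix.add_apply, Matrix.smul_apply, hRS, smul_eq_mul]
    have h1 := hMred i j
    have h2 := hR i j
    have h3 := hpos j
    have h4 := mul_nonneg h2.1 h3.le
    have h5 := mul_le_mul_of_nonneg_right h2.2 h3.le
    constructor <;> nlinarith
  have hprod : ∏ j, (2 * S (c j) (c j)) ≤ (lam : ℤ) ^ n := by
    refine le_trans ?_ (hdet ▸ hlam_det)
    have : ∏ j, (2 * S (c j) (c j)) = ∏ i ∈ Finset.univ.image c, (2 * S i i) := by
      rw [Finset.prod_image (fun a _ b _ h => hc h)]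
    rw [this]
    refine Finset.prod_le_prod_of_subset_of_one_le (Finset.subset_univ _) ?_ ?_
    · intro i _
      have := hpos i
      omega
    · intro i _ _
      have := hpos i
      omega
  have hprod0 : 0 ≤ ∏ j, (2 * S (c j) (c j)) :=
    Finset.prod_nonneg fun j _ => by have := hpos (c j); omega
  calc _ ≤ ∏ j, ∑ i, ((M + (2 : ℤ) • (R * S)).submatrix r c) i j ^ 2 := hadamard_sq _
    _ ≤ ∏ j : Fin m, ((lam : ℤ) ^ 3 * (2 * S (c j) (c j)) ^ 2) := by
      refine Finset.prod_le_prod (fun j _ => Finset.sum_nonneg fun i _ => sq_nonneg _) ?_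
      intro j _
      calc _ ≤ ∑ i : Fin m, ((lam : ℤ) * (2 * S (c j) (c j))) ^ 2 := by
            refine Finset.sum_le_sum fun i _ => ?_
            exact pow_le_pow_left₀ (hB _ _).1 (hB _ _).2 2
        _ = (m : ℤ) * ((lam : ℤ) * (2 * S (c j) (c j))) ^ 2 := by simp
        _ ≤ (lam : ℤ) * ((lam : ℤ) * (2 * S (c j) (c j))) ^ 2 := by
            refine mul_le_mul_of_nonneg_right ?_ (sq_nonneg _)
            exact_mod_cast hmn.trans hlam_n
        _ = _ := by ring
    _ = (lam : ℤ) ^ (3 * m) * (∏ j, (2 * S (c j) (c j))) ^ 2 := by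
      rw [Finset.prod_mul_distrib, Finset.prod_pow Finset.univ 2]
      simp [pow_mul]
    _ ≤ (lam : ℤ) ^ (3 * n) * ((lam : ℤ) ^ n) ^ 2 := by
      refine mul_le_mul ?_ (pow_le_pow_left₀ hprod0 hprod 2) (sq_nonneg _) (by positivity)
      exact pow_le_pow_right₀ hl (by omega)
    _ = _ := by rw [← pow_mul, ← pow_add]; congr 1; ring
end
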